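/- The density ρ(d) = (1/(2J₂(2))) e^{−3|d|/2} J₁(2e^{−|d|/2}) satisfies the integral equation ρ(d) = e^{d}∫_{−∞}^{d} ρ(δ)dδ + e^{2d}∫_{d}^{∞} ρ(δ)e^{−δ}dδ for all d < 0. -/

import Mathlib

open Real MeasureTheory Set

/-- The Bessel function of the first kind of integer order `n`. -/
noncomputable def besselJ (n : ℕ) (x : ℝ) : ℝ :=
  ∑' m : ℕ, (-1 : ℝ) ^ m / (m.factorial * (m + n).factorial) * (x / 2) ^ (2 * m + n)

/-- The stationary density of the difference chain. -/
noncomputable def ρstat (d : ℝ) : ℝ :=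
  (1 / (2 * besselJ 2 2)) * exp (-(3 * |d| / 2)) * besselJ 1 (2 * exp (-(|d| / 2)))

/-!
Write `C n` for the Bessel-Clifford functions, so that `J n x = (x / 2) ^ n * C n (-(x / 2) ^ 2)`.
In the variable `s = exp (-|δ|)` the density is a multiple of `s ^ 2 * C 1 (-s)`, and the relations
`C n' = C (n + 1)` and `C n z = (n + 1) * C (n + 1) z + z * C (n + 2) z` give antiderivatives of
everything in sight. For `d ≤ 0` and `s = exp d` the two integrals are, up to the same multiple,
`s ^ 2 * C 2 (-s)` and `C 0 (-s)`: in the second one the boundary terms at `δ = 0` cancel, because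
`C 2 (-1) - C 3 (-1) = C 0 (-1)`. The integral equation thus becomes the recurrence
`C 1 (-s) = s * C 2 (-s) + C 0 (-s)`.
-/

section BesselClifford

open scoped Nat

variable {𝕜 : Type*} [RCLike 𝕜]

/-- The Bessel-Clifford function of integer order `n`, the entire function with
`besselJ n x = (x / 2) ^ n * besselClifford n (-(x / 2) ^ 2)`. It is used in place of `besselJ`
because its derivative and its recurrence in `n` involve no division by the argument. -/
noncomputable def besselClifford (n : ℕ) (z : 𝕜) : 𝕜 :=
  ∑' m : ℕ, z ^ m / (m ! * (m + n)!)

theorem norm_pow_div_factorial_mul_factorial_le (m n : ℕ) (z : 𝕜) :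
    ‖z ^ m / (m ! * n ! : 𝕜)‖ ≤ ‖z‖ ^ m / m ! := by
  rw [norm_div, norm_mul, norm_pow, RCLike.norm_natCast, RCLike.norm_natCast]
  gcongr
  exact le_mul_of_one_le_right (by positivity) (mod_cast n.factorial_pos)

theorem hasSum_besselClifford (n : ℕ) (z : 𝕜) :
    HasSum (fun m : ℕ ↦ z ^ m / (m ! * (m + n)! : 𝕜)) (besselClifford n z) :=
  (Summable.of_norm_bounded (Real.summable_pow_div_factorial ‖z‖) fun m ↦
    norm_pow_div_factorial_mul_factorial_le m (m + n) z).hasSum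

theorem hasSum_besselClifford_tail (n : ℕ) (z : 𝕜) :
    HasSum (fun m : ℕ ↦ z ^ (m + 1) / ((m + 1)! * (m + 1 + n)! : 𝕜))
      (besselClifford n z - 1 / n !) := by
  simpa using (hasSum_nat_add_iff' 1).2 (hasSum_besselClifford n z)

theorem hasDerivAt_pow_succ_div_factorial (m : ℕ) (c z : 𝕜) :
    HasDerivAt (fun w ↦ w ^ (m + 1) / ((m + 1)! * c)) (z ^ m / (m ! * c)) z := by
  refine ((hasDerivAt_pow (m + 1) z).div_const _).congr_deriv ?_
  rw [Nat.factorial_succ, Nat.cast_mul, add_tsub_cancel_right, mul_assoc,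
    mul_div_mul_left _ _ (Nat.cast_ne_zero.2 m.succ_ne_zero)]

theorem hasDerivAt_besselClifford (n : ℕ) (z : 𝕜) :
    HasDerivAt (besselClifford n) (besselClifford (n + 1) z) z := by
  have hz : z ∈ Metric.ball (0 : 𝕜) (‖z‖ + 1) := by simp
  have hbound (m : ℕ) (w : 𝕜) (hw : w ∈ Metric.ball 0 (‖z‖ + 1)) :
      ‖w ^ m / (m ! * (m + 1 + n)! : 𝕜)‖ ≤ (‖z‖ + 1) ^ m / m ! := by
    refine (norm_pow_div_factorial_mul_factorial_le m (m + 1 + n) w).trans ?_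
    gcongr
    exact (mem_ball_zero_iff.1 hw).le
  have hderiv := hasDerivAt_tsum_of_isPreconnected
    (Real.summable_pow_div_factorial (‖z‖ + 1)) Metric.isOpen_ball
    (convex_ball 0 _).isPreconnected
    (fun m w _ ↦ hasDerivAt_pow_succ_div_factorial m ((m + 1 + n)! : 𝕜) w) hbound hz
    (hasSum_besselClifford_tail n z).summable hz
  refine ((hderiv.add_const (1 / n ! : 𝕜)).congr_deriv ?_).congr_of_eventuallyEq
    (.of_forall fun w ↦ ?_)
  · simp only [besselClifford, add_right_comm, ← add_assoc]
  · exact sub_eq_iff_eq_add.1 (hasSum_besselClifford_tail n w).tsum_eq.symm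

theorem continuous_besselClifford (n : ℕ) : Continuous (besselClifford n : 𝕜 → 𝕜) :=
  continuous_iff_continuousAt.2 fun z ↦ (hasDerivAt_besselClifford n z).continuousAt

theorem besselClifford_recurrence (n : ℕ) (z : 𝕜) :
    besselClifford n z = (n + 1) * besselClifford (n + 1) z + z * besselClifford (n + 2) z := by
  have hzero : (1 : 𝕜) / n ! = (n + 1) * (1 / (n + 1)!) := by
    rw [Nat.factorial_succ]
    push_cast
    field_simp
  have hsum := ((hasSum_besselClifford_tail (n + 1) z).mul_left ((n : 𝕜) + 1)).add
    ((hasSum_besselClifford (n + 2) z).mul_left z)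
  have hterms := (hasSum_besselClifford_tail n z).unique (hsum.congr_fun fun m ↦ ?_)
  · linear_combination hterms + hzero
  · have hne : (m : 𝕜) + 1 + n + 1 ≠ 0 := mod_cast (m + 1 + n).succ_ne_zero
    rw [show m + 1 + (n + 1) = m + 1 + n + 1 by ring, show m + (n + 2) = m + 1 + n + 1 by ring,
      Nat.factorial_succ (m + 1 + n), Nat.factorial_succ m]
    push_cast
    field_simp
    ring

theorem hasDerivAt_besselClifford_neg (n : ℕ) (z : 𝕜) :
    HasDerivAt (fun w ↦ besselClifford n (-w)) (-besselClifford (n + 1) (-z)) z :=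
  ((hasDerivAt_besselClifford n (-z)).comp z (hasDerivAt_neg z)).congr_deriv (mul_neg_one _)

theorem hasDerivAt_pow_succ_mul_besselClifford_neg (n : ℕ) (z : 𝕜) :
    HasDerivAt (fun w ↦ w ^ (n + 1) * besselClifford (n + 1) (-w))
      (z ^ n * besselClifford n (-z)) z := by
  refine ((hasDerivAt_pow (n + 1) z).mul (hasDerivAt_besselClifford_neg (n + 1) z)).congr_deriv ?_
  rw [besselClifford_recurrence n (-z)]
  push_cast
  ring

end BesselClifford

theorem besselJ_eq_pow_mul_besselClifford (n : ℕ) (x : ℝ) :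
    besselJ n x = (x / 2) ^ n * besselClifford n (-(x / 2) ^ 2) := by
  rw [besselJ, besselClifford, ← tsum_mul_left]
  refine tsum_congr fun m ↦ ?_
  rw [neg_pow ((x / 2) ^ 2), ← pow_mul, pow_add]
  ring

theorem integral_besselClifford_neg (n : ℕ) (a b : ℝ) :
    ∫ s in a..b, besselClifford (n + 1) (-s) = besselClifford n (-a) - besselClifford n (-b) := by
  have hcont := continuous_besselClifford (𝕜 := ℝ) (n + 1)
  rw [intervalIntegral.integral_eq_sub_of_hasDerivAt (f := fun s ↦ -besselClifford n (-s))
    (fun s _ ↦ (hasDerivAt_besselClifford_neg n s).fun_neg.congr_deriv (neg_neg _))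
    (Continuous.intervalIntegrable (by fun_prop) a b)]
  ring

theorem integral_pow_mul_besselClifford_neg (n : ℕ) (x : ℝ) :
    ∫ s in 0..x, s ^ n * besselClifford n (-s) = x ^ (n + 1) * besselClifford (n + 1) (-x) := by
  have hcont := continuous_besselClifford (𝕜 := ℝ) n
  rw [intervalIntegral.integral_eq_sub_of_hasDerivAt
    (fun s _ ↦ hasDerivAt_pow_succ_mul_besselClifford_neg n s)
    (Continuous.intervalIntegrable (by fun_prop) 0 x)]
  simp

theorem integral_pow_succ_mul_besselClifford_neg (n : ℕ) (x : ℝ) :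
    ∫ s in 0..x, s ^ (n + 1) * besselClifford n (-s) =
      x ^ (n + 2) * (besselClifford (n + 1) (-x) - besselClifford (n + 2) (-x)) := by
  have hcont := continuous_besselClifford (𝕜 := ℝ) n
  have hderiv (s : ℝ) := ((hasDerivAt_id s).mul
    (hasDerivAt_pow_succ_mul_besselClifford_neg n s)).sub
    (hasDerivAt_pow_succ_mul_besselClifford_neg (n + 1) s)
  rw [intervalIntegral.integral_eq_sub_of_hasDerivAt
    (fun s _ ↦ (hderiv s).congr_deriv (by simp only [id]; ring))
    (Continuous.intervalIntegrable (by fun_prop) 0 x)]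
  simp only [id, zero_pow (Nat.succ_ne_zero _), Pi.sub_apply, Pi.mul_apply]
  ring

section ExpSubstitution

variable {E : Type*} [NormedAddCommGroup E] [NormedSpace ℝ E]

theorem integral_comp_exp_Iic (g : ℝ → E) (a : ℝ) :
    ∫ x in Iic a, exp x • g (exp x) = ∫ y in 0..exp a, g y := by
  rw [intervalIntegral.integral_of_le (exp_pos a).le, ← image_exp_Iic,
    integral_image_eq_integral_abs_deriv_smul measurableSet_Iic
      (fun x _ ↦ (hasDerivAt_exp x).hasDerivWithinAt) exp_injective.injOn]
  simp only [abs_exp]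

theorem integrableOn_comp_exp_Iic (g : ℝ → E) (a : ℝ) :
    IntegrableOn (fun x ↦ exp x • g (exp x)) (Iic a) ↔
      IntervalIntegrable g volume 0 (exp a) := by
  rw [intervalIntegrable_iff_integrableOn_Ioc_of_le (exp_pos a).le, ← image_exp_Iic,
    integrableOn_image_iff_integrableOn_abs_deriv_smul measurableSet_Iic
      (fun x _ ↦ (hasDerivAt_exp x).hasDerivWithinAt) exp_injective.injOn]
  simp only [abs_exp]

end ExpSubstitution

theorem ρstat_eq_besselClifford (δ : ℝ) :
    ρstat δ = 1 / (2 * besselJ 2 2) * (exp (-|δ|) ^ 2 * besselClifford 1 (-exp (-|δ|))) := by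
  have hhalf : exp (-|δ|) = exp (-(|δ| / 2)) ^ 2 := by
    rw [← exp_nat_mul]; congr 1; push_cast; ring
  have hcube : exp (-(3 * |δ| / 2)) = exp (-(|δ| / 2)) ^ 3 := by
    rw [← exp_nat_mul]; congr 1; push_cast; ring
  rw [ρstat, besselJ_eq_pow_mul_besselClifford 1, mul_div_cancel_left₀ _ two_ne_zero, hhalf, hcube]
  ring

theorem ρstat_of_nonpos {δ : ℝ} (hδ : δ ≤ 0) :
    ρstat δ = 1 / (2 * besselJ 2 2) * (exp δ ^ 2 * besselClifford 1 (-exp δ)) := by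
  rw [ρstat_eq_besselClifford, abs_of_nonpos hδ, neg_neg]

theorem ρstat_neg (δ : ℝ) : ρstat (-δ) = ρstat δ := by
  rw [ρstat, ρstat, abs_neg]

theorem continuous_ρstat : Continuous ρstat := by
  have hcont := continuous_besselClifford (𝕜 := ℝ) 1
  rw [funext ρstat_eq_besselClifford]
  fun_prop

theorem integral_ρstat_Iio {d : ℝ} (hd : d ≤ 0) :
    ∫ δ in Iio d, ρstat δ =
      1 / (2 * besselJ 2 2) * (exp d ^ 2 * besselClifford 2 (-exp d)) := by
  calc ∫ δ in Iio d, ρstat δ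
      = ∫ δ in Iic d, exp δ • (1 / (2 * besselJ 2 2) *
          (exp δ ^ 1 * besselClifford 1 (-exp δ))) := by
        rw [← integral_Iic_eq_integral_Iio]
        refine setIntegral_congr_fun measurableSet_Iic fun δ hδ ↦ ?_
        simp only [ρstat_of_nonpos (hδ.trans hd), smul_eq_mul]
        ring
    _ = 1 / (2 * besselJ 2 2) * ∫ s in 0..exp d, s ^ 1 * besselClifford 1 (-s) := by
        rw [integral_comp_exp_Iic (fun s ↦ 1 / (2 * besselJ 2 2) *
          (s ^ 1 * besselClifford 1 (-s))), intervalIntegral.integral_const_mul]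
    _ = _ := by rw [integral_pow_mul_besselClifford_neg]

theorem ρstat_neg_mul_exp_of_nonpos {δ : ℝ} (hδ : δ ≤ 0) :
    ρstat (-δ) * exp (-(-δ)) =
      exp δ • (1 / (2 * besselJ 2 2) * (exp δ ^ 2 * besselClifford 1 (-exp δ))) := by
  rw [ρstat_neg, neg_neg, ρstat_of_nonpos hδ, smul_eq_mul, mul_comm]

theorem integrableOn_ρstat_mul_exp_neg_Ioi_zero :
    IntegrableOn (fun δ ↦ ρstat δ * exp (-δ)) (Ioi 0) := by
  have hcont := continuous_besselClifford (𝕜 := ℝ) 1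
  have hint := (integrableOn_comp_exp_Iic (fun s ↦ 1 / (2 * besselJ 2 2) *
    (s ^ 2 * besselClifford 1 (-s))) 0).2 (Continuous.intervalIntegrable (by fun_prop) _ _)
  have hneg : IntegrableOn (fun δ ↦ ρstat (-δ) * exp (-(-δ))) (Iic (-0)) := by
    rw [neg_zero]
    exact hint.congr_fun (fun δ hδ ↦ (ρstat_neg_mul_exp_of_nonpos hδ).symm) measurableSet_Iic
  simpa only [neg_neg] using hneg.comp_neg_Ici.mono_set Ioi_subset_Ici_self

theorem integral_ρstat_mul_exp_neg_Ioi_zero :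
    ∫ δ in Ioi 0, ρstat δ * exp (-δ) = 1 / (2 * besselJ 2 2) * besselClifford 0 (-1) := by
  have hboundary : besselClifford 2 (-1 : ℝ) - besselClifford 3 (-1) = besselClifford 0 (-1) := by
    have h0 := besselClifford_recurrence 0 (-1 : ℝ)
    have h1 := besselClifford_recurrence 1 (-1 : ℝ)
    norm_num at h0 h1
    linear_combination -h0 - h1
  calc ∫ δ in Ioi 0, ρstat δ * exp (-δ)
      = ∫ δ in Iic 0, ρstat (-δ) * exp (-(-δ)) := by
        rw [integral_comp_neg_Iic 0 fun δ ↦ ρstat δ * exp (-δ), neg_zero]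
    _ = ∫ δ in Iic 0, exp δ • (1 / (2 * besselJ 2 2) *
          (exp δ ^ 2 * besselClifford 1 (-exp δ))) :=
        setIntegral_congr_fun measurableSet_Iic fun _ ↦ ρstat_neg_mul_exp_of_nonpos
    _ = 1 / (2 * besselJ 2 2) * ∫ s in 0..1, s ^ 2 * besselClifford 1 (-s) := by
        rw [integral_comp_exp_Iic (fun s ↦ 1 / (2 * besselJ 2 2) *
          (s ^ 2 * besselClifford 1 (-s))), intervalIntegral.integral_const_mul, exp_zero]
    _ = _ := by rw [integral_pow_succ_mul_besselClifford_neg, one_pow, one_mul, hboundary]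

theorem intervalIntegral_ρstat_mul_exp_neg {d : ℝ} (hd : d ≤ 0) :
    ∫ δ in d..0, ρstat δ * exp (-δ) =
      1 / (2 * besselJ 2 2) * (besselClifford 0 (-exp d) - besselClifford 0 (-1)) := by
  have hcont := continuous_besselClifford (𝕜 := ℝ) 1
  calc ∫ δ in d..0, ρstat δ * exp (-δ)
      = ∫ δ in d..0, 1 / (2 * besselJ 2 2) * (besselClifford 1 (-exp δ) * exp δ) := by
        refine intervalIntegral.integral_congr fun δ hδ ↦ ?_
        rw [uIcc_of_le hd] at hδ
        simp only [ρstat_of_nonpos hδ.2, exp_neg]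
        field_simp
    _ = 1 / (2 * besselJ 2 2) * ∫ s in exp d..exp 0, besselClifford 1 (-s) := by
        rw [intervalIntegral.integral_const_mul,
          ← intervalIntegral.integral_comp_mul_deriv (g := fun s ↦ besselClifford 1 (-s))
            (fun δ _ ↦ hasDerivAt_exp δ) continuous_exp.continuousOn (by fun_prop)]
        rfl
    _ = _ := by rw [integral_besselClifford_neg, exp_zero]

theorem integral_ρstat_mul_exp_neg_Ioi {d : ℝ} (hd : d ≤ 0) :
    ∫ δ in Ioi d, ρstat δ * exp (-δ) =
      1 / (2 * besselJ 2 2) * besselClifford 0 (-exp d) := by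
  have hcont := continuous_ρstat
  rw [← intervalIntegral.integral_interval_add_Ioi'
      (Continuous.intervalIntegrable (by fun_prop) d 0) integrableOn_ρstat_mul_exp_neg_Ioi_zero,
    intervalIntegral_ρstat_mul_exp_neg hd, integral_ρstat_mul_exp_neg_Ioi_zero]
  ring

/-- `ρstat` satisfies the stationary integral equation for `d < 0`. -/
theorem ρstat_integral_equation :
    ∀ d < (0 : ℝ), ρstat d =
      exp d * (∫ δ in Iio d, ρstat δ) + exp (2 * d) * ∫ δ in Ioi d, ρstat δ * exp (-δ) := by
  intro d hd
  have hrec : besselClifford 0 (-exp d) =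
      besselClifford 1 (-exp d) - exp d * besselClifford 2 (-exp d) := by
    simpa [sub_eq_add_neg] using besselClifford_recurrence 0 (-exp d)
  have hsq : exp (2 * d) = exp d ^ 2 := mod_cast exp_nat_mul d 2
  rw [ρstat_of_nonpos hd.le, integral_ρstat_Iio hd.le, integral_ρstat_mul_exp_neg_Ioi hd.le, hrec,
    hsq]
  ring
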